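/- For R > 0 let Q_R = {z ∈ ℂ : 0 < Re z < 2R and −R < Im z < R}. Let φ : ℂ → ℂ be holomorphic and injective on the right half-plane ℍ = {z ∈ ℂ : Re z > 0}, let H > 0 and 0 < α ≤ 1, and suppose that for every T ≥ 1 one has |φ(T·w₁) − φ(T·w₂)| ≤ H·T·|φ′(T)|·|w₁ − w₂|^α for all w₁, w₂ ∈ Q₁. Then for every real R ≥ e one has |φ(log R)| ≤ |φ(1)| + 16H·|φ′(1)|·(log R)². -/

import Mathlib

/-!
Bieberbach's inequality `‖f''(0)‖ ≤ 4 ‖f'(0)‖` for univalent functions on the disc, transported to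
the right half-plane by a Cayley transform centred at `w`, reads
`‖x φ''(w) + φ'(w)‖ ≤ 2 ‖φ'(w)‖` with `x = Re w`. Along the real axis this says that the derivative
of `x φ'(x)` with respect to `log x` is at most twice as large as `x φ'(x)` itself, whence
`‖φ'(T)‖ ≤ T ‖φ'(1)‖` for `T ≥ 1`; the Hölder condition at scale `T`, applied to the points `1` and
`1 / T`, then gives the growth estimate.

Bieberbach's inequality follows from the area theorem for `1 / z + h z` by the square-root
transform. To avoid any winding number argument, the image of the annulus `r < ‖z‖ < ρ` is not
located inside a Jordan curve but is mapped by the real-linear map `w ↦ w - c w̄`, with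
`c = h'(0) r²`, into a disc of radius `1 / r + O(r²)`; comparing areas and letting `r → 0` suffices.
-/

open Complex

/-- The half-open square `Q_R = {0 < Re z < 2R, -R < Im z < R}`. -/
def Qsq (R : ℝ) : Set ℂ :=
  {z : ℂ | 0 < z.re ∧ z.re < 2 * R ∧ -R < z.im ∧ z.im < R}

section

open Filter MeasureTheory Metric Set
open scoped ComplexConjugate ENNReal Real Topology

theorem exists_eventually_eq_add_pow {f : ℂ → ℂ} {z₀ : ℂ} (hf : AnalyticAt ℂ f z₀)
    (hne : ¬∀ᶠ z in 𝓝 z₀, f z = f z₀) :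
    ∃ n ≠ 0, ∃ h : ℂ → ℂ, AnalyticAt ℂ h z₀ ∧ h z₀ = 0 ∧ deriv h z₀ ≠ 0 ∧
      ∀ᶠ z in 𝓝 z₀, f z = f z₀ + h z ^ n := by
  obtain ⟨n, g, hg, hg₀, hfg⟩ := (hf.sub analyticAt_const).exists_eventuallyEq_pow_smul_nonzero_iff
    |>.2 (by simpa only [Pi.sub_apply, sub_eq_zero] using hne)
  have hn : n ≠ 0 := by
    rintro rfl
    simpa [hg₀.symm] using hfg.self_of_nhds
  obtain ⟨c, hc⟩ := IsAlgClosed.exists_pow_nat_eq (g z₀) (Nat.pos_of_ne_zero hn)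
  have hc₀ : c ≠ 0 := by
    rintro rfl
    exact hg₀ (by rw [← hc, zero_pow hn])
  let k : ℂ → ℂ := fun z ↦ c * (g z / g z₀) ^ (n⁻¹ : ℂ)
  have hk : AnalyticAt ℂ k z₀ := analyticAt_const.mul <|
    (hg.div analyticAt_const hg₀).cpow analyticAt_const (by simp [div_self hg₀])
  have hkn (z : ℂ) : k z ^ n = g z := by
    simp only [k, mul_pow, hc, cpow_nat_inv_pow _ hn, mul_div_cancel₀ _ hg₀]
  have hderiv : HasDerivAt (fun z ↦ (z - z₀) * k z) (k z₀) z₀ := by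
    simpa using ((hasDerivAt_id' z₀).sub_const z₀).fun_mul hk.differentiableAt.hasDerivAt
  refine ⟨n, hn, fun z ↦ (z - z₀) * k z, (analyticAt_id.sub analyticAt_const).mul hk, by simp,
    ?_, ?_⟩
  · simpa [hderiv.deriv, k, div_self hg₀] using hc₀
  · filter_upwards [hfg] with z hz
    rw [mul_pow, hkn, ← smul_eq_mul, ← hz, Pi.sub_apply, add_sub_cancel]

theorem deriv_ne_zero_of_injOn {f : ℂ → ℂ} {U : Set ℂ} {z₀ : ℂ} (hf : AnalyticAt ℂ f z₀)
    (hU : U ∈ 𝓝 z₀) (hinj : InjOn f U) : deriv f z₀ ≠ 0 := by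
  have hne : ¬∀ᶠ z in 𝓝 z₀, f z = f z₀ := fun h ↦ by
    obtain ⟨z, ⟨hz, hzU⟩, hzz₀⟩ := (((h.and hU).filter_mono nhdsWithin_le_nhds).and
      (eventually_mem_nhdsWithin (a := z₀) (s := {z₀}ᶜ))).exists
    exact hzz₀ (hinj hzU (mem_of_mem_nhds hU) hz)
  obtain ⟨n, hn, h, hh, hh₀, hh', hfh⟩ := exists_eventually_eq_add_pow hf hne
  have hmap : map h (𝓝 z₀) = 𝓝 0 := by
    rw [hh.hasStrictDerivAt.map_nhds_eq hh', hh₀]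
  have hsurj : ∀ᶠ w in 𝓝 0, ∃ z ∈ U, f z = f z₀ + w ^ n ∧ h z = w := by
    rw [← hmap, eventually_map]
    filter_upwards [hU, hfh] with z hzU hz using ⟨z, hzU, hz, rfl⟩
  let ω := exp (2 * π * I / n)
  have hω : IsPrimitiveRoot ω n := isPrimitiveRoot_exp n hn
  have hrot : Tendsto (ω * ·) (𝓝 0) (𝓝 0) := by
    simpa using (continuous_const_mul ω).tendsto 0
  obtain ⟨w, ⟨⟨z₁, hz₁, hfz₁, hhz₁⟩, z₂, hz₂, hfz₂, hhz₂⟩, hw⟩ :=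
    (((hsurj.and (hrot.eventually hsurj)).filter_mono nhdsWithin_le_nhds).and
      (eventually_mem_nhdsWithin (a := (0 : ℂ)) (s := {0}ᶜ))).exists
  have hz : z₁ = z₂ := hinj hz₁ hz₂ (by rw [hfz₁, hfz₂, mul_pow, hω.pow_eq_one, one_mul])
  have hω₁ : ω = 1 := mul_right_cancel₀ hw (by rw [← hhz₂, ← hz, hhz₁, one_mul])
  obtain rfl : n = 1 := hω.eq_orderOf.trans (by rw [hω₁, orderOf_one])
  simp only [pow_one] at hfh
  rwa [EventuallyEq.deriv_eq hfh, deriv_const_add]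

theorem differentiableOn_of_differentiableOn_pow {q : ℂ → ℂ} {U : Set ℂ} (hU : IsOpen U) {n : ℕ}
    (hn : n ≠ 0) (hq : ContinuousOn q U) (hne : ∀ z ∈ U, q z ≠ 0)
    (hqn : DifferentiableOn ℂ (fun z ↦ q z ^ n) U) : DifferentiableOn ℂ q U := by
  intro z hz
  have hzU := hU.mem_nhds hz
  have hpow : HasStrictDerivAt (fun w : ℂ ↦ w ^ n) (n * q z ^ (n - 1)) (q z) :=
    hasStrictDerivAt_pow n (q z)
  have hpow₀ : (n : ℂ) * q z ^ (n - 1) ≠ 0 :=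
    mul_ne_zero (Nat.cast_ne_zero.2 hn) (pow_ne_zero _ (hne z hz))
  have hinv := (hpow.to_localInverse hpow₀).hasDerivAt.differentiableAt.comp z
    (hqn.differentiableAt hzU)
  refine (hinv.congr_of_eventuallyEq ?_).differentiableWithinAt
  have := (hpow.hasStrictFDerivAt_equiv hpow₀).eventually_left_inverse
  filter_upwards [(hq.continuousAt hzU).eventually this] with w hw using hw.symm

theorem isSimplyConnected_of_convex {E : Type*} [AddCommGroup E] [Module ℝ E] [TopologicalSpace E]
    [ContinuousAdd E] [ContinuousSMul ℝ E] {s : Set E} (hs : Convex ℝ s) (hne : s.Nonempty) :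
    IsSimplyConnected s := by
  have := hs.contractibleSpace hne
  exact inferInstanceAs (SimplyConnectedSpace s)

theorem exists_differentiableOn_pow_eq {f : ℂ → ℂ} {U : Set ℂ} (hUc : IsSimplyConnected U)
    (hUo : IsOpen U) (hf : DifferentiableOn ℂ f U) (hne : ∀ z ∈ U, f z ≠ 0) {n : ℕ} (hn : n ≠ 0) :
    ∃ q : ℂ → ℂ, DifferentiableOn ℂ q U ∧ ∀ z, q z ^ n = f z := by
  obtain ⟨q, hq, hqf⟩ := exists_continuousOn_pow_eq hUc hUo hf.continuousOn
    (by rintro ⟨z, hz, hz₀⟩; exact hne z hz hz₀) hn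
  refine ⟨q, differentiableOn_of_differentiableOn_pow hUo hn hq
    (fun z hz hz₀ ↦ hne z hz ?_) ?_, hqf⟩
  · rw [← hqf, hz₀, zero_pow hn]
  · simpa only [hqf] using hf

theorem deriv_deriv_eq_two_smul_deriv_dslope {𝕜 E : Type*} [NontriviallyNormedField 𝕜]
    [CompleteSpace 𝕜] [NormedAddCommGroup E] [NormedSpace 𝕜 E] [CompleteSpace E] {f : 𝕜 → E}
    {a : 𝕜} (hf : AnalyticAt 𝕜 f a) :
    deriv (deriv f) a = (2 : 𝕜) • deriv (dslope f a) a := by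
  obtain ⟨p, hp⟩ := hf
  have hd : AnalyticAt 𝕜 (dslope f a) a := ⟨_, hp.has_fpower_series_dslope_fslope⟩
  have hf_eq : f = fun z ↦ f a + (z - a) • dslope f a z := by
    funext z
    rw [sub_smul_dslope, add_sub_cancel]
  have hderiv : deriv f =ᶠ[𝓝 a] fun z ↦ (z - a) • deriv (dslope f a) z + dslope f a z := by
    filter_upwards [hd.eventually_analyticAt] with z hz
    have hprod := ((((hasDerivAt_id' z).sub_const a).fun_smul
      hz.differentiableAt.hasDerivAt).const_add (f a)).deriv
    rwa [← hf_eq, one_smul] at hprod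
  rw [hderiv.deriv_eq, ((((hasDerivAt_id' a).sub_const a).fun_smul
    hd.deriv.differentiableAt.hasDerivAt).fun_add hd.differentiableAt.hasDerivAt).deriv]
  simp [two_smul]

theorem norm_sq_add_two_mul_re_le_norm_sq (c w : ℂ) :
    ‖c‖ ^ 2 + 2 * (conj c * (w - c)).re ≤ ‖w‖ ^ 2 := by
  have h := normSq_add c (w - c)
  rw [add_sub_cancel, normSq_eq_norm_sq, normSq_eq_norm_sq] at h
  rw [h, ← conj_re (conj c * _), map_mul, conj_conj]
  linarith [normSq_nonneg (w - c)]

-- For `w = e z` and `c = e 0` the left-hand side is, on each circle `‖z‖ = s`, the real part of a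
-- holomorphic function, so its circle average is its value at the centre.
theorem norm_sq_add_two_mul_re_le_norm_div_pow_add_sq (a c w : ℂ) {z : ℂ} (hz : z ≠ 0) (k : ℕ) :
    ‖a‖ ^ 2 / ‖z‖ ^ (2 * k) + ‖c‖ ^ 2 +
      2 * (conj a * z ^ k / ‖z‖ ^ (2 * k) * w + conj c * (w - c)).re ≤ ‖a / z ^ k + w‖ ^ 2 := by
  have hnorm : ‖a / z ^ k‖ ^ 2 = ‖a‖ ^ 2 / ‖z‖ ^ (2 * k) := by
    rw [norm_div, norm_pow, div_pow, ← pow_mul, mul_comm k]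
  have hconj : conj a * z ^ k / ‖z‖ ^ (2 * k) = conj (a / z ^ k) := by
    have := (map_ne_zero conj).2 hz
    rw [pow_mul, ← mul_conj', mul_pow, map_div₀, map_pow]
    field_simp
  have hcross : (a / z ^ k * conj w).re = (conj (a / z ^ k) * w).re := by
    rw [← conj_re, map_mul, conj_conj]
  have hexpand := normSq_add (a / z ^ k) w
  rw [normSq_eq_norm_sq, normSq_eq_norm_sq, normSq_eq_norm_sq, hnorm, hcross] at hexpand
  rw [hexpand, hconj, add_re]
  linarith [norm_sq_add_two_mul_re_le_norm_sq c w]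

theorem norm_sq_le_circleAverage_norm_div_pow_add_sq {e : ℂ → ℂ} {s : ℝ} (hs : 0 < s)
    (he : DiffContOnCl ℂ e (ball 0 s)) (a : ℂ) {k : ℕ} (hk : k ≠ 0) :
    ‖a‖ ^ 2 / s ^ (2 * k) + ‖e 0‖ ^ 2 ≤
      Real.circleAverage (fun z ↦ ‖a / z ^ k + e z‖ ^ 2) 0 s := by
  have hs_abs : |s| = s := abs_of_pos hs
  have hsphere {z : ℂ} (hz : z ∈ sphere 0 |s|) : z ≠ 0 :=
    ne_of_mem_sphere hz (abs_pos.2 hs.ne').ne'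
  let Ψ : ℂ → ℂ := fun z ↦ (‖a‖ ^ 2 / s ^ (2 * k) + ‖e 0‖ ^ 2 : ℝ) +
    (2 : ℝ) * (conj a * z ^ k / s ^ (2 * k) * e z + conj (e 0) * (e z - e 0))
  have hΨ : DiffContOnCl ℂ Ψ (ball 0 |s|) := by
    rw [hs_abs]
    have hpow : DiffContOnCl ℂ (fun z : ℂ ↦ conj a * z ^ k / s ^ (2 * k)) (ball 0 s) :=
      Differentiable.diffContOnCl (by fun_prop)
    exact (((hpow.smul he).add ((he.sub_const _).const_smul (conj (e 0)))).const_smul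
      ((2 : ℝ) : ℂ)).const_add _
  have hΨ_cont : ContinuousOn Ψ (sphere 0 |s|) :=
    hΨ.continuousOn_ball.mono sphere_subset_closedBall
  have he_cont : ContinuousOn e (sphere 0 |s|) := by
    rw [hs_abs]
    exact he.continuousOn_ball.mono sphere_subset_closedBall
  calc ‖a‖ ^ 2 / s ^ (2 * k) + ‖e 0‖ ^ 2 = Real.circleAverage (reCLM ∘ Ψ) 0 s := by
        rw [reCLM.circleAverage_comp_comm hΨ_cont.circleIntegrable', hΨ.circleAverage]
        simp [Ψ, hk, -ofReal_add, -ofReal_div]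
    _ ≤ _ := Real.circleAverage_mono ?_ ?_ fun z hz ↦ ?_
  · exact (continuous_re.comp_continuousOn hΨ_cont).circleIntegrable'
  · exact (((continuousOn_const.div (by fun_prop) fun z hz ↦ pow_ne_zero k (hsphere hz)).add
      he_cont).norm.pow 2).circleIntegrable'
  · have h := norm_sq_add_two_mul_re_le_norm_div_pow_add_sq a (e 0) (e z) (hsphere hz) k
    rw [mem_sphere_zero_iff_norm.1 hz, hs_abs] at h
    rwa [Function.comp_apply, reCLM_apply, add_re, ofReal_re, re_ofReal_mul]

/-- The open annulus `r < ‖z‖ < ρ` centred at the origin. -/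
def annulus (r ρ : ℝ) : Set ℂ :=
  {z | r < ‖z‖ ∧ ‖z‖ < ρ}

theorem isOpen_annulus (r ρ : ℝ) : IsOpen (annulus r ρ) :=
  (isOpen_lt continuous_const continuous_norm).inter (isOpen_lt continuous_norm continuous_const)

theorem lintegral_circleMap_eq_circleAverage {F : ℂ → ℝ} {c : ℂ} {s : ℝ} (hF₀ : ∀ z, 0 ≤ F z)
    (hF : CircleIntegrable F c s) :
    ∫⁻ θ in Ioo (-π) π, ENNReal.ofReal (F (circleMap c s θ)) =
      ENNReal.ofReal (2 * π * Real.circleAverage F c s) := by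
  have hle : -π ≤ π := by linarith [Real.pi_pos]
  have hper : Function.Periodic (fun θ ↦ F (circleMap c s θ)) (2 * π) :=
    (periodic_circleMap c s).comp F
  have hint : IntervalIntegrable (fun θ ↦ F (circleMap c s θ)) volume (-π) π :=
    hper.intervalIntegrable₀ Real.two_pi_pos.ne' hF _ _
  have hshift := hper.intervalIntegral_add_eq (-π) 0
  rw [zero_add, show -π + 2 * π = π by ring] at hshift
  rw [Real.circleAverage_def, smul_eq_mul, mul_inv_cancel_left₀ Real.two_pi_pos.ne', ← hshift,
    intervalIntegral.integral_of_le hle, integral_Ioc_eq_integral_Ioo,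
    ofReal_integral_eq_lintegral_ofReal ((intervalIntegrable_iff_integrableOn_Ioo_of_le hle).1 hint)
      (ae_of_all _ fun θ ↦ hF₀ _)]

theorem polarCoord_target_inter_preimage_annulus {r ρ : ℝ} (hr : 0 ≤ r) :
    polarCoord.target ∩ (fun p ↦ circleMap 0 p.1 p.2) ⁻¹' annulus r ρ =
      Ioo r ρ ×ˢ Ioo (-π) π := by
  ext ⟨s, θ⟩
  simp only [polarCoord_target, annulus, mem_inter_iff, mem_prod, mem_Ioi, mem_Ioo, mem_preimage,
    mem_ofPred_eq, norm_circleMap_zero]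
  constructor
  · rintro ⟨⟨hs, hθ⟩, hs'⟩
    rw [abs_of_pos hs] at hs'
    exact ⟨hs', hθ⟩
  · rintro ⟨hs, hθ⟩
    have hs₀ := hr.trans_lt hs.1
    rw [abs_of_pos hs₀]
    exact ⟨⟨hs₀, hθ⟩, hs⟩

theorem lintegral_annulus_eq_lintegral_circleAverage {F : ℂ → ℝ} (hF : Measurable F)
    (hF₀ : ∀ z, 0 ≤ F z) {r ρ : ℝ} (hr : 0 ≤ r)
    (hint : ∀ s ∈ Ioo r ρ, CircleIntegrable F 0 s) :
    ∫⁻ z in annulus r ρ, ENNReal.ofReal (F z) =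
      ∫⁻ s in Ioo r ρ, ENNReal.ofReal (2 * π * s * Real.circleAverage F 0 s) := by
  have hsymm (p : ℝ × ℝ) : Complex.polarCoord.symm p = circleMap 0 p.1 p.2 := by
    rw [Complex.polarCoord_symm_apply, circleMap_zero, exp_mul_I, ofReal_cos, ofReal_sin]
  have hmeas : Measurable fun p : ℝ × ℝ ↦ circleMap 0 p.1 p.2 := by unfold circleMap; fun_prop
  have hA := (isOpen_annulus r ρ).measurableSet
  calc ∫⁻ z in annulus r ρ, ENNReal.ofReal (F z)
      = ∫⁻ p in Ioo r ρ ×ˢ Ioo (-π) π,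
          ENNReal.ofReal p.1 * ENNReal.ofReal (F (circleMap 0 p.1 p.2)) := by
        rw [← lintegral_indicator hA, ← Complex.lintegral_comp_polarCoord_symm,
          ← polarCoord_target_inter_preimage_annulus hr, inter_comm,
          ← setLIntegral_indicator (hmeas hA)]
        refine lintegral_congr fun p ↦ ?_
        rw [hsymm, smul_eq_mul, ← indicator_comp_right, indicator_mul_right]
        rfl
    _ = ∫⁻ s in Ioo r ρ, ENNReal.ofReal s *
          ∫⁻ θ in Ioo (-π) π, ENNReal.ofReal (F (circleMap 0 s θ)) := by
        rw [Measure.volume_eq_prod, ← Measure.prod_restrict, lintegral_prod _ (by fun_prop)]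
        exact lintegral_congr fun s ↦ lintegral_const_mul (ENNReal.ofReal s)
          (hF.comp (continuous_circleMap 0 s).measurable).ennreal_ofReal
    _ = ∫⁻ s in Ioo r ρ, ENNReal.ofReal (2 * π * s * Real.circleAverage F 0 s) := by
        refine setLIntegral_congr_fun measurableSet_Ioo fun s hs ↦ ?_
        rw [lintegral_circleMap_eq_circleAverage hF₀ (hint s hs),
          ← ENNReal.ofReal_mul (hr.trans hs.1.le)]
        congr 1
        ring

theorem lintegral_Ioo_two_pi_mul_inv_pow_four_add_const {r ρ b : ℝ} (hr : 0 < r) (hrρ : r ≤ ρ)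
    (hb : 0 ≤ b) :
    ∫⁻ s in Ioo r ρ, ENNReal.ofReal (2 * π * s * (1 / s ^ 4 + b)) =
      ENNReal.ofReal (π * (1 / r ^ 2 - 1 / ρ ^ 2 + b * (ρ ^ 2 - r ^ 2))) := by
  have hpos {s : ℝ} (hs : s ∈ uIcc r ρ) : s ≠ 0 := by
    rw [uIcc_of_le hrρ] at hs
    exact (hr.trans_le hs.1).ne'
  have hderiv (s : ℝ) (hs : s ∈ uIcc r ρ) : HasDerivAt (fun s ↦ π * (b * s ^ 2 - (s ^ 2)⁻¹))
      (2 * π * s * (1 / s ^ 4 + b)) s := by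
    have hs₀ := hpos hs
    refine (((hasDerivAt_pow 2 s).const_mul b).fun_sub ((hasDerivAt_pow 2 s).fun_inv
      (pow_ne_zero 2 hs₀)) |>.const_mul π).congr_deriv ?_
    push_cast
    field_simp
    ring
  have hint : IntervalIntegrable (fun s : ℝ ↦ 2 * π * s * (1 / s ^ 4 + b)) volume r ρ :=
    ContinuousOn.intervalIntegrable <| ContinuousOn.mul (by fun_prop) <|
      (continuousOn_const.div (by fun_prop) fun s hs ↦ pow_ne_zero 4 (hpos hs)).add
        continuousOn_const
  have hnonneg : ∀ᵐ s ∂volume.restrict (Ioo r ρ), 0 ≤ 2 * π * s * (1 / s ^ 4 + b) := by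
    filter_upwards [ae_restrict_mem measurableSet_Ioo] with s hs
    have := hr.trans hs.1
    positivity
  rw [← ofReal_integral_eq_lintegral_ofReal
      ((intervalIntegrable_iff_integrableOn_Ioo_of_le hrρ).1 hint) hnonneg,
    ← integral_Ioc_eq_integral_Ioo, ← intervalIntegral.integral_of_le hrρ,
    intervalIntegral.integral_eq_sub_of_hasDerivAt hderiv hint]
  ring_nf

theorem ofReal_le_lintegral_annulus_norm_div_sq_add_sq {e : ℂ → ℂ} (he_meas : Measurable e)
    {r ρ : ℝ} (hr : 0 < r) (hrρ : r ≤ ρ) (he : DifferentiableOn ℂ e (ball 0 ρ)) :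
    ENNReal.ofReal (π * (1 / r ^ 2 - 1 / ρ ^ 2 + ‖e 0‖ ^ 2 * (ρ ^ 2 - r ^ 2))) ≤
      ∫⁻ z in annulus r ρ, ENNReal.ofReal (‖-1 / z ^ 2 + e z‖ ^ 2) := by
  have hcont : ContinuousOn (fun z ↦ ‖-1 / z ^ 2 + e z‖ ^ 2) (ball 0 ρ \ {0}) :=
    (((continuousOn_const.div (by fun_prop) fun z hz ↦ pow_ne_zero 2 hz.2).add
      (he.continuousOn.mono sdiff_subset)).norm).pow 2
  have hcircle (s : ℝ) (hs : s ∈ Ioo r ρ) :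
      CircleIntegrable (fun z ↦ ‖-1 / z ^ 2 + e z‖ ^ 2) 0 s := by
    have hs₀ : 0 < s := hr.trans hs.1
    refine (hcont.mono fun z hz ↦ ⟨?_, ne_of_mem_sphere hz hs₀.ne'⟩).circleIntegrable hs₀.le
    exact sphere_subset_closedBall.trans (closedBall_subset_ball hs.2) hz
  have hnonneg (z : ℂ) : 0 ≤ ‖-1 / z ^ 2 + e z‖ ^ 2 := by positivity
  rw [lintegral_annulus_eq_lintegral_circleAverage (by fun_prop) hnonneg hr.le hcircle,
    ← lintegral_Ioo_two_pi_mul_inv_pow_four_add_const hr hrρ (sq_nonneg _)]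
  refine setLIntegral_mono' measurableSet_Ioo fun s hs ↦ ENNReal.ofReal_le_ofReal ?_
  have hs₀ : 0 < s := hr.trans hs.1
  have h := norm_sq_le_circleAverage_norm_div_pow_add_sq hs₀
    (he.diffContOnCl_ball (closedBall_subset_ball hs.2)) (-1) two_ne_zero
  rw [norm_neg, norm_one, one_pow] at h
  gcongr

theorem volume_image_eq_lintegral_norm_sq {f f' : ℂ → ℂ} {s : Set ℂ} (hs : MeasurableSet s)
    (hf : ∀ z ∈ s, HasDerivWithinAt f (f' z) s z) (hinj : InjOn f s) :
    volume (f '' s) = ∫⁻ z in s, ENNReal.ofReal (‖f' z‖ ^ 2) := by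
  have hdet (w : ℂ) :
      ((ContinuousLinearMap.toSpanSingleton ℂ w).restrictScalars ℝ).det = ‖w‖ ^ 2 := by
    simp [ContinuousLinearMap.det, LinearMap.det_restrictScalars, Algebra.norm_complex_eq,
      normSq_eq_norm_sq]
  rw [← lintegral_abs_det_fderiv_eq_addHaar_image volume hs
    (fun z hz ↦ (hf z hz).hasFDerivWithinAt.restrictScalars ℝ) hinj]
  simp only [hdet, abs_sq]

theorem volume_image_sub_mul_conj (c : ℂ) (s : Set ℂ) :
    volume ((fun w ↦ w - c * conj w) '' s) = ENNReal.ofReal |1 - ‖c‖ ^ 2| * volume s := by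
  let L : ℂ →ₗ[ℝ] ℂ := LinearMap.id - LinearMap.mulLeft ℝ c ∘ₗ conjAe.toLinearMap
  have hdet : LinearMap.det L = 1 - ‖c‖ ^ 2 := by
    have hmatrix : LinearMap.toMatrix basisOneI basisOneI L =
        !![1 - c.re, -c.im; -c.im, 1 + c.re] := by
      ext i j
      fin_cases i <;> fin_cases j <;> simp [L, LinearMap.toMatrix_apply]
    rw [← LinearMap.det_toMatrix basisOneI, hmatrix, Matrix.det_fin_two_of, ← normSq_eq_norm_sq,
      normSq_apply]
    ring
  rw [← hdet]
  exact Measure.addHaar_image_linearMap volume L s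

theorem volume_closedBall_eq_ofReal (c : ℂ) {M : ℝ} (hM : 0 ≤ M) :
    volume (closedBall c M) = ENNReal.ofReal (π * M ^ 2) := by
  rw [Complex.volume_closedBall, mul_comm π, ENNReal.ofReal_mul (by positivity),
    ENNReal.ofReal_pow hM, ← NNReal.coe_real_pi, ENNReal.ofReal_coe_nnreal]

theorem inv_add_mul_sub_add_le_of_mul_le_one {r s B K : ℝ} (hr : 0 < r) (hrs : r ≤ s) (hs : s ≤ 1)
    (hB : 0 ≤ B) (hK : 0 ≤ K) (hsmall : (2 * B + 4 * K) * r ≤ 1) :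
    1 / s + B * (s - r ^ 2 / s) + 2 * K * s ^ 2 ≤ 1 / r + 2 * K * r ^ 2 := by
  have hs₀ : 0 < s := hr.trans_le hrs
  have hinv : (2 * B + 4 * K) * (s - r) ≤ 1 / r - 1 / s := by
    have hrs_mul : 2 * B + 4 * K ≤ 1 / (r * s) := by
      rw [le_div_iff₀ (by positivity), ← mul_assoc]
      exact mul_le_one₀ hsmall hs₀.le hs
    calc (2 * B + 4 * K) * (s - r) ≤ 1 / (r * s) * (s - r) :=
          mul_le_mul_of_nonneg_right hrs_mul (sub_nonneg.2 hrs)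
      _ = 1 / r - 1 / s := by field_simp
  have hlin : s - r ^ 2 / s ≤ 2 * (s - r) := by
    have : 2 * (s - r) - (s - r ^ 2 / s) = (s - r) ^ 2 / s := by field_simp; ring
    have : 0 ≤ (s - r) ^ 2 / s := by positivity
    linarith
  have hsq : s ^ 2 - r ^ 2 ≤ 2 * (s - r) := by nlinarith
  linarith [mul_le_mul_of_nonneg_left hlin hB, mul_le_mul_of_nonneg_left hsq hK]

theorem one_div_add_mul_add_sub_mul_conj_eq (b e : ℂ) {z : ℂ} (hz : z ≠ 0) (r : ℝ) :
    (1 / z + b * z + e) - b * r ^ 2 * conj (1 / z + b * z + e) =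
      (1 - ‖b‖ ^ 2 * r ^ 2 * ‖z‖ ^ 2 : ℝ) / z + b * (z * (1 - r ^ 2 / ‖z‖ ^ 2 : ℝ)) +
        (e - b * r ^ 2 * conj e) := by
  have hz' := (map_ne_zero conj).2 hz
  push_cast
  rw [← mul_conj', ← mul_conj']
  simp only [map_add, map_mul, map_div₀, map_one]
  field_simp
  ring

-- With `c = b r²` the map `w ↦ w - c w̄` straightens the ellipse traced by `1 / z + b z` on
-- `‖z‖ = r` into a circle of radius `(1 - ‖c‖²) / r`.
theorem norm_one_div_add_mul_add_sub_mul_conj_le {b e z : ℂ} {r K : ℝ} (hr : 0 < r) (hrz : r ≤ ‖z‖)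
    (hz : ‖z‖ ≤ 1) (he : ‖e‖ ≤ K * ‖z‖ ^ 2) (hsmall : (2 * ‖b‖ + 4 * K) * r ≤ 1) :
    ‖(1 / z + b * z + e) - b * r ^ 2 * conj (1 / z + b * z + e)‖ ≤ 1 / r + 2 * K * r ^ 2 := by
  have hz₀ : 0 < ‖z‖ := hr.trans_le hrz
  have hK : 0 ≤ K := nonneg_of_mul_nonneg_left ((norm_nonneg e).trans he) (by positivity)
  have hr₁ : r ≤ 1 := hrz.trans hz
  have hbr : ‖b‖ * r ≤ 1 := by nlinarith [mul_nonneg (norm_nonneg b) hr.le, mul_nonneg hK hr.le]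
  have hbr₂ : ‖b * r ^ 2‖ ≤ 1 := by
    rw [norm_mul, norm_pow, norm_real, Real.norm_of_nonneg hr.le, pow_two, ← mul_assoc]
    exact mul_le_one₀ hbr hr.le hr₁
  have hpole : ‖((1 - ‖b‖ ^ 2 * r ^ 2 * ‖z‖ ^ 2 : ℝ) : ℂ) / z‖ ≤ 1 / ‖z‖ := by
    have : (‖b‖ * r * ‖z‖) ^ 2 ≤ 1 := pow_le_one₀ (by positivity) (mul_le_one₀ hbr hz₀.le hz)
    rw [mul_pow, mul_pow] at this
    rw [norm_div, norm_real, Real.norm_eq_abs]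
    gcongr
    exact abs_le.2 ⟨by linarith, by linarith [show 0 ≤ ‖b‖ ^ 2 * r ^ 2 * ‖z‖ ^ 2 by positivity]⟩
  have hlinear : ‖b * (z * (1 - r ^ 2 / ‖z‖ ^ 2 : ℝ))‖ = ‖b‖ * (‖z‖ - r ^ 2 / ‖z‖) := by
    have : r ^ 2 / ‖z‖ ^ 2 ≤ 1 := (div_le_one (by positivity)).2 (by gcongr)
    rw [norm_mul, norm_mul, norm_real, Real.norm_of_nonneg (sub_nonneg.2 this)]
    field_simp
  have herror : ‖e - b * r ^ 2 * conj e‖ ≤ 2 * K * ‖z‖ ^ 2 := by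
    calc ‖e - b * r ^ 2 * conj e‖ ≤ ‖e‖ + ‖b * r ^ 2‖ * ‖e‖ :=
          (norm_sub_le _ _).trans_eq (by rw [norm_mul (b * r ^ 2 : ℂ), norm_conj])
      _ ≤ 2 * K * ‖z‖ ^ 2 := by nlinarith [norm_nonneg e]
  rw [one_div_add_mul_add_sub_mul_conj_eq b e (norm_pos_iff.1 hz₀) r]
  calc _ ≤ 1 / ‖z‖ + ‖b‖ * (‖z‖ - r ^ 2 / ‖z‖) + 2 * K * ‖z‖ ^ 2 :=
        norm_add₃_le.trans (add_le_add_three hpole hlinear.le herror)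
    _ ≤ _ := inv_add_mul_sub_add_le_of_mul_le_one hr hrz hz (norm_nonneg b) hK hsmall

theorem hasDerivAt_one_div_add {𝕜 : Type*} [NontriviallyNormedField 𝕜] {h : 𝕜 → 𝕜} {h' z : 𝕜}
    (hz : z ≠ 0) (hh : HasDerivAt h h' z) :
    HasDerivAt (fun z ↦ 1 / z + h z) (-1 / z ^ 2 + h') z := by
  simpa only [inv_eq_one_div] using ((hasDerivAt_id' z).fun_inv hz).fun_add hh

theorem area_inequality_of_injOn {h : ℂ → ℂ} {r ρ K : ℝ} (hr : 0 < r) (hrρ : r ≤ ρ) (hρ : ρ ≤ 1)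
    (hh : DifferentiableOn ℂ h (ball 0 ρ)) (hinj : InjOn (fun z ↦ 1 / z + h z) (ball 0 ρ \ {0}))
    (hK : ∀ z ∈ ball 0 ρ, ‖h z - deriv h 0 * z‖ ≤ K * ‖z‖ ^ 2)
    (hsmall : (2 * ‖deriv h 0‖ + 4 * K) * r ≤ 1) :
    (1 - (‖deriv h 0‖ * r ^ 2) ^ 2) *
        (1 / r ^ 2 - 1 / ρ ^ 2 + ‖deriv h 0‖ ^ 2 * (ρ ^ 2 - r ^ 2)) ≤
      (1 / r + 2 * K * r ^ 2) ^ 2 := by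
  let g : ℂ → ℂ := fun z ↦ 1 / z + h z
  let c : ℂ := deriv h 0 * r ^ 2
  have hc : ‖c‖ = ‖deriv h 0‖ * r ^ 2 := by
    rw [norm_mul, norm_pow, norm_real, Real.norm_of_nonneg hr.le]
  have hsub : annulus r ρ ⊆ ball 0 ρ \ {0} := fun z hz ↦
    ⟨mem_ball_zero_iff.2 hz.2, norm_pos_iff.1 (hr.trans hz.1)⟩
  have hderiv (z : ℂ) (hz : z ∈ annulus r ρ) : HasDerivAt g (-1 / z ^ 2 + deriv h z) z :=
    hasDerivAt_one_div_add (hsub hz).2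
      (hh.differentiableAt (isOpen_ball.mem_nhds (hsub hz).1)).hasDerivAt
  have harea := volume_image_eq_lintegral_norm_sq (isOpen_annulus r ρ).measurableSet
    (fun z hz ↦ (hderiv z hz).hasDerivWithinAt) (hinj.mono hsub)
  have hK₀ : 0 ≤ K := by
    have hρ₀ : 0 < ρ := hr.trans_le hrρ
    have hz : ‖((ρ / 2 : ℝ) : ℂ)‖ = ρ / 2 := by rw [norm_real, Real.norm_of_nonneg (by linarith)]
    have := (norm_nonneg _).trans (hK (ρ / 2 : ℝ) (mem_ball_zero_iff.2 (by linarith)))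
    exact nonneg_of_mul_nonneg_left this (by rw [hz]; positivity)
  have himage : (fun w ↦ w - c * conj w) '' (g '' annulus r ρ) ⊆
      closedBall 0 (1 / r + 2 * K * r ^ 2) := by
    rintro _ ⟨_, ⟨z, hz, rfl⟩, rfl⟩
    have := norm_one_div_add_mul_add_sub_mul_conj_le hr hz.1.le (hz.2.le.trans hρ)
      (hK z (hsub hz).1) hsmall
    rwa [add_assoc, add_sub_cancel, ← mem_closedBall_zero_iff] at this
  have hvol := measure_mono (μ := volume) himage
  rw [volume_image_sub_mul_conj, harea, volume_closedBall_eq_ofReal 0 (by positivity), hc] at hvol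
  have hlower := ofReal_le_lintegral_annulus_norm_div_sq_add_sq (measurable_deriv h) hr hrρ
    (hh.deriv isOpen_ball)
  have hle := (mul_le_mul_right hlower _).trans hvol
  rw [← ENNReal.ofReal_mul (abs_nonneg _), ENNReal.ofReal_le_ofReal_iff (by positivity),
    mul_left_comm] at hle
  have hnonneg : 0 ≤ 1 / r ^ 2 - 1 / ρ ^ 2 + ‖deriv h 0‖ ^ 2 * (ρ ^ 2 - r ^ 2) := by
    have hpow : r ^ 2 ≤ ρ ^ 2 := by gcongr
    exact add_nonneg (sub_nonneg.2 (by gcongr)) (mul_nonneg (sq_nonneg _) (sub_nonneg.2 hpow))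
  exact (mul_le_mul_of_nonneg_right (le_abs_self _) hnonneg).trans
    (le_of_mul_le_mul_left hle Real.pi_pos)

theorem mul_sq_le_one_of_eventually_area_inequality {B K ρ : ℝ} (hρ : 0 < ρ)
    (h : ∀ᶠ r in 𝓝[>] 0, (1 - (B * r ^ 2) ^ 2) *
      (1 / r ^ 2 - 1 / ρ ^ 2 + B ^ 2 * (ρ ^ 2 - r ^ 2)) ≤ (1 / r + 2 * K * r ^ 2) ^ 2) :
    B * ρ ^ 2 ≤ 1 := by
  have hleft : Tendsto (fun r ↦ (1 - B ^ 2 * r ^ 4) * (B ^ 2 * ρ ^ 2 - 1 / ρ ^ 2 - B ^ 2 * r ^ 2))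
      (𝓝[>] 0) (𝓝 (B ^ 2 * ρ ^ 2 - 1 / ρ ^ 2)) :=
    (Continuous.tendsto' (by fun_prop) 0 _ (by simp)).mono_left nhdsWithin_le_nhds
  have hright : Tendsto (fun r ↦ B ^ 2 * r ^ 2 + 4 * K * r + 4 * K ^ 2 * r ^ 4) (𝓝[>] 0) (𝓝 0) :=
    (Continuous.tendsto' (by fun_prop) 0 _ (by simp)).mono_left nhdsWithin_le_nhds
  have hle : B ^ 2 * ρ ^ 2 - 1 / ρ ^ 2 ≤ 0 := by
    refine le_of_tendsto_of_tendsto hleft hright ?_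
    filter_upwards [h, self_mem_nhdsWithin] with r hr hr₀
    have hr₀ : r ≠ 0 := (mem_Ioi.1 hr₀).ne'
    have hl : (1 - (B * r ^ 2) ^ 2) * (1 / r ^ 2 - 1 / ρ ^ 2 + B ^ 2 * (ρ ^ 2 - r ^ 2)) =
        1 / r ^ 2 - B ^ 2 * r ^ 2 +
          (1 - B ^ 2 * r ^ 4) * (B ^ 2 * ρ ^ 2 - 1 / ρ ^ 2 - B ^ 2 * r ^ 2) := by
      field_simp
      ring
    have hr : (1 / r + 2 * K * r ^ 2) ^ 2 = 1 / r ^ 2 + 4 * K * r + 4 * K ^ 2 * r ^ 4 := by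
      field_simp
      ring
    linarith
  refine le_of_sq_le_sq ?_ zero_le_one
  rw [sub_nonpos, le_div_iff₀ (by positivity)] at hle
  linarith

theorem exists_norm_sub_deriv_mul_le {h : ℂ → ℂ} {ρ : ℝ} (hρ : 0 < ρ)
    (hh : DifferentiableOn ℂ h (closedBall 0 ρ)) (h₀ : h 0 = 0) :
    ∃ K, ∀ z ∈ closedBall 0 ρ, ‖h z - deriv h 0 * z‖ ≤ K * ‖z‖ ^ 2 := by
  have hnhds : closedBall (0 : ℂ) ρ ∈ 𝓝 0 := closedBall_mem_nhds 0 hρ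
  have hd := (differentiableOn_dslope hnhds).2 ((differentiableOn_dslope hnhds).2 hh)
  obtain ⟨K, hK⟩ := (isCompact_closedBall 0 ρ).exists_bound_of_continuousOn hd.continuousOn
  refine ⟨K, fun z hz ↦ ?_⟩
  have hexp : h z - deriv h 0 * z = dslope (dslope h 0) 0 z * z ^ 2 := by
    have h₁ := sub_smul_dslope h 0 z
    have h₂ := sub_smul_dslope (dslope h 0) 0 z
    simp only [dslope_same, sub_zero, smul_eq_mul, h₀] at h₁ h₂
    linear_combination -h₁ - z * h₂
  rw [hexp, norm_mul, norm_pow]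
  gcongr
  exact hK z hz

theorem norm_deriv_le_one_of_injOn_one_div_add {h : ℂ → ℂ} (hh : DifferentiableOn ℂ h (ball 0 1))
    (hinj : InjOn (fun z ↦ 1 / z + h z) (ball 0 1 \ {0})) : ‖deriv h 0‖ ≤ 1 := by
  wlog h₀ : h 0 = 0 generalizing h
  · rw [← deriv_sub_const (h 0)]
    refine this (hh.sub_const _) (fun z hz w hw hzw ↦ hinj hz hw ?_) (sub_self _)
    simpa only [← add_sub_assoc, sub_left_inj] using hzw
  have hρ : ∀ ρ ∈ Ioo (0 : ℝ) 1, ‖deriv h 0‖ * ρ ^ 2 ≤ 1 := by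
    rintro ρ ⟨hρ, hρ₁⟩
    obtain ⟨K, hK⟩ := exists_norm_sub_deriv_mul_le hρ (hh.mono (closedBall_subset_ball hρ₁)) h₀
    have hsub : ball (0 : ℂ) ρ ⊆ ball 0 1 := ball_subset_ball hρ₁.le
    have hsmall : ∀ᶠ r : ℝ in 𝓝[>] 0, (2 * ‖deriv h 0‖ + 4 * K) * r < 1 :=
      nhdsWithin_le_nhds <| (Continuous.tendsto' (by fun_prop) 0 0 (by simp)).eventually_lt_const
        one_pos
    refine mul_sq_le_one_of_eventually_area_inequality (K := K) hρ ?_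
    filter_upwards [Ioo_mem_nhdsGT hρ, hsmall] with r hr hr_small
    exact area_inequality_of_injOn hr.1 hr.2.le hρ₁.le (hh.mono hsub)
      (hinj.mono (sdiff_subset_sdiff_left hsub)) (fun z hz ↦ hK z (ball_subset_closedBall hz))
      hr_small.le
  have hlim : Tendsto (fun ρ : ℝ ↦ ‖deriv h 0‖ * ρ ^ 2) (𝓝[<] 1) (𝓝 ‖deriv h 0‖) :=
    (Continuous.tendsto' (by fun_prop) 1 _ (by simp)).mono_left nhdsWithin_le_nhds
  refine le_of_tendsto hlim ?_
  filter_upwards [Ioo_mem_nhdsLT one_pos] using hρ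

theorem sq_mem_ball_zero_one {z : ℂ} (hz : z ∈ ball 0 1) : z ^ 2 ∈ ball (0 : ℂ) 1 := by
  rw [mem_ball_zero_iff] at hz ⊢
  exact (norm_pow z 2).trans_lt (pow_lt_one₀ (norm_nonneg z) hz two_ne_zero)

theorem norm_deriv_le_of_injOn_comp_sq_div {q : ℂ → ℂ} (hq : DifferentiableOn ℂ q (ball 0 1))
    (hq₀ : q 0 ≠ 0) (hinj : InjOn (fun z ↦ q (z ^ 2) / z) (ball 0 1 \ {0})) :
    ‖deriv q 0‖ ≤ ‖q 0‖ := by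
  let h : ℂ → ℂ := fun z ↦ z * (dslope q 0 (z ^ 2) / q 0)
  have hd : DifferentiableOn ℂ (fun z ↦ dslope q 0 (z ^ 2) / q 0) (ball 0 1) := by
    have hdslope := (differentiableOn_dslope (ball_mem_nhds 0 one_pos)).2 hq
    exact (hdslope.comp (by fun_prop) fun z hz ↦ sq_mem_ball_zero_one hz).div_const _
  have hh : DifferentiableOn ℂ h (ball 0 1) := differentiableOn_id.mul hd
  have heq (z : ℂ) (hz : z ≠ 0) : 1 / z + h z = q (z ^ 2) / z / q 0 := by
    have := sub_smul_dslope q 0 (z ^ 2)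
    rw [sub_zero, smul_eq_mul] at this
    simp only [h]
    field_simp
    linear_combination this
  have hh_inj : InjOn (fun z ↦ 1 / z + h z) (ball 0 1 \ {0}) := fun z hz w hw hzw ↦ by
    refine hinj hz hw ((div_left_inj' hq₀).1 ?_)
    rwa [← heq z hz.2, ← heq w hw.2]
  have hderiv : deriv h 0 = deriv q 0 / q 0 := by
    have := ((hasDerivAt_id' 0).fun_mul
      (hd.differentiableAt (ball_mem_nhds 0 one_pos)).hasDerivAt).deriv
    simpa using this
  have := norm_deriv_le_one_of_injOn_one_div_add hh hh_inj
  rwa [hderiv, norm_div, div_le_one (norm_pos_iff.2 hq₀)] at this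

theorem injOn_comp_sq_div {f q : ℂ → ℂ} (hf : InjOn f (ball 0 1))
    (hq : ∀ z ∈ ball 0 1, q z ^ 2 * (f z - f 0) = z) :
    InjOn (fun z ↦ q (z ^ 2) / z) (ball 0 1 \ {0}) := by
  rintro z ⟨hz, hz₀⟩ w ⟨hw, hw₀⟩ hzw
  replace hzw : q (z ^ 2) / z = q (w ^ 2) / w := hzw
  have hone {u : ℂ} (hu : u ∈ ball 0 1) (hu₀ : u ∉ ({0} : Set ℂ)) :
      (q (u ^ 2) / u) ^ 2 * (f (u ^ 2) - f 0) = 1 := by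
    rw [div_pow, div_mul_eq_mul_div, hq _ (sq_mem_ball_zero_one hu), div_self (pow_ne_zero 2 hu₀)]
  have hf_eq : f (z ^ 2) = f (w ^ 2) := by
    have hq_ne := left_ne_zero_of_mul_eq_one (hone hz hz₀)
    refine (sub_left_inj (a := f 0)).1 (mul_left_cancel₀ hq_ne ?_)
    rw [hone hz hz₀, hzw, hone hw hw₀]
  have hzw_sq : z ^ 2 = w ^ 2 := hf (sq_mem_ball_zero_one hz) (sq_mem_ball_zero_one hw) hf_eq
  refine (sq_eq_sq_iff_eq_or_eq_neg.1 hzw_sq).resolve_right fun hneg ↦ ?_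
  have hodd : -(q (w ^ 2) / w) = q (w ^ 2) / w := by
    rwa [hzw_sq, hneg, div_neg] at hzw
  have := hone hw hw₀
  simp [neg_eq_self.1 hodd] at this

theorem dslope_ne_zero_of_injOn {f : ℂ → ℂ} {U : Set ℂ} {a : ℂ} (hf : AnalyticAt ℂ f a)
    (hU : U ∈ 𝓝 a) (hinj : InjOn f U) {z : ℂ} (hz : z ∈ U) : dslope f a z ≠ 0 := by
  rcases eq_or_ne z a with rfl | hza
  · rw [dslope_same]
    exact deriv_ne_zero_of_injOn hf hU hinj
  · rw [dslope_of_ne f hza, slope_def_field]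
    exact div_ne_zero (sub_ne_zero.2 fun h ↦ hza (hinj hz (mem_of_mem_nhds hU) h))
      (sub_ne_zero.2 hza)

theorem norm_deriv_deriv_le_four_mul_norm_deriv {f : ℂ → ℂ} (hf : DifferentiableOn ℂ f (ball 0 1))
    (hinj : InjOn f (ball 0 1)) : ‖deriv (deriv f) 0‖ ≤ 4 * ‖deriv f 0‖ := by
  have hnhds : ball (0 : ℂ) 1 ∈ 𝓝 0 := ball_mem_nhds 0 one_pos
  have h0 : (0 : ℂ) ∈ ball 0 1 := mem_ball_self one_pos
  let p : ℂ → ℂ := dslope f 0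
  have hp : DifferentiableOn ℂ p (ball 0 1) := (differentiableOn_dslope hnhds).2 hf
  have hp₀ : p 0 = deriv f 0 := dslope_same f 0
  have hmul (z : ℂ) : z * p z = f z - f 0 := by simpa using sub_smul_dslope f 0 z
  have hp_ne (z : ℂ) (hz : z ∈ ball 0 1) : p z ≠ 0 :=
    dslope_ne_zero_of_injOn (hf.analyticAt hnhds) hnhds hinj hz
  obtain ⟨q, hq, hqp⟩ := exists_differentiableOn_pow_eq
    (isSimplyConnected_of_convex (convex_ball (0 : ℂ) 1) ⟨0, h0⟩) isOpen_ball (hp.inv hp_ne)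
    (fun z hz ↦ inv_ne_zero (hp_ne z hz)) two_ne_zero
  have hqp_one (z : ℂ) (hz : z ∈ ball 0 1) : q z ^ 2 * p z = 1 := by
    rw [hqp, Pi.inv_apply, inv_mul_cancel₀ (hp_ne z hz)]
  have hq₀ : q 0 ≠ 0 := pow_ne_zero_iff two_ne_zero |>.1 (left_ne_zero_of_mul_eq_one (hqp_one 0 h0))
  have hq_bound : ‖deriv q 0‖ ≤ ‖q 0‖ := by
    refine norm_deriv_le_of_injOn_comp_sq_div hq hq₀ (injOn_comp_sq_div hinj fun z hz ↦ ?_)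
    rw [← hmul, mul_left_comm, hqp_one z hz, mul_one]
  have hderiv : q 0 * deriv p 0 = -2 * deriv q 0 * p 0 := by
    have hprod := ((hq.differentiableAt hnhds).hasDerivAt.fun_pow 2).fun_mul
      (hp.differentiableAt hnhds).hasDerivAt
    have hconst : (fun z ↦ q z ^ 2 * p z) =ᶠ[𝓝 0] fun _ ↦ 1 := by
      filter_upwards [hnhds] using hqp_one
    have hzero := hprod.deriv.symm.trans (hconst.deriv_eq.trans (deriv_const 0 1))
    refine mul_left_cancel₀ hq₀ ?_
    push_cast at hzero
    linear_combination hzero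
  have hp_bound : ‖deriv p 0‖ ≤ 2 * ‖p 0‖ := by
    refine le_of_mul_le_mul_left ?_ (norm_pos_iff.2 hq₀)
    rw [← norm_mul, hderiv, norm_mul, norm_mul, norm_neg, norm_ofNat]
    nlinarith [norm_nonneg (p 0)]
  rw [deriv_deriv_eq_two_smul_deriv_dslope (hf.analyticAt hnhds), norm_smul, norm_ofNat, ← hp₀]
  linarith

/-- The Möbius transformation taking the unit disc onto the right half-plane and `0` to `w`, for
`0 < w.re`. -/
noncomputable def cayley (w z : ℂ) : ℂ :=
  (w + conj w * z) / (1 - z)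

theorem cayley_zero (w : ℂ) : cayley w 0 = w := by
  simp [cayley]

theorem one_sub_ne_zero_of_mem_ball {z : ℂ} (hz : z ∈ ball 0 1) : 1 - z ≠ 0 := by
  rintro h
  simp [← sub_eq_zero.1 h] at hz

theorem hasDerivAt_cayley (w : ℂ) {z : ℂ} (hz : 1 - z ≠ 0) :
    HasDerivAt (cayley w) (2 * w.re / (1 - z) ^ 2) z := by
  refine ((((hasDerivAt_id' z).const_mul (conj w)).const_add w).fun_div
    ((hasDerivAt_id' z).const_sub 1) hz).congr_deriv ?_
  rw [re_eq_add_conj]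
  field_simp
  ring

theorem re_cayley (w z : ℂ) : (cayley w z).re = w.re * ((1 - ‖z‖ ^ 2) / ‖1 - z‖ ^ 2) := by
  rw [cayley, div_re, ← normSq_eq_norm_sq, ← normSq_eq_norm_sq, ← add_div, ← mul_div_assoc]
  congr 1
  simp only [normSq_apply, add_re, add_im, sub_re, sub_im, mul_re, mul_im, conj_re, conj_im, one_re,
    one_im]
  ring

theorem re_cayley_pos {w z : ℂ} (hw : 0 < w.re) (hz : z ∈ ball 0 1) : 0 < (cayley w z).re := by
  have hz_norm : ‖z‖ ^ 2 < 1 :=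
    pow_lt_one₀ (norm_nonneg z) (mem_ball_zero_iff.1 hz) two_ne_zero
  have hz_sub : 0 < ‖1 - z‖ := norm_pos_iff.2 (one_sub_ne_zero_of_mem_ball hz)
  rw [re_cayley]
  exact mul_pos hw (div_pos (sub_pos.2 hz_norm) (by positivity))

theorem injOn_cayley {w : ℂ} (hw : w.re ≠ 0) : InjOn (cayley w) (ball 0 1) := by
  intro z hz u hu hzu
  rw [cayley, cayley, div_eq_div_iff (one_sub_ne_zero_of_mem_ball hz)
    (one_sub_ne_zero_of_mem_ball hu)] at hzu
  have : w + conj w ≠ 0 := by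
    rw [add_conj]
    exact_mod_cast mul_ne_zero two_ne_zero hw
  refine mul_left_cancel₀ this ?_
  linear_combination hzu

theorem hasDerivAt_comp_cayley {φ : ℂ → ℂ} (hφ : DifferentiableOn ℂ φ {z | 0 < z.re}) {w z : ℂ}
    (hw : 0 < w.re) (hz : z ∈ ball 0 1) :
    HasDerivAt (φ ∘ cayley w) (deriv φ (cayley w z) * (2 * w.re / (1 - z) ^ 2)) z :=
  (hφ.differentiableAt ((isOpen_re_gt 0).mem_nhds (re_cayley_pos hw hz))).hasDerivAt.comp z
    (hasDerivAt_cayley w (one_sub_ne_zero_of_mem_ball hz))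

theorem deriv_deriv_comp_cayley {φ : ℂ → ℂ} (hφ : DifferentiableOn ℂ φ {z | 0 < z.re}) {w : ℂ}
    (hw : 0 < w.re) :
    deriv (deriv (φ ∘ cayley w)) 0 = 4 * w.re * (w.re * deriv (deriv φ) w + deriv φ w) := by
  have hderiv : deriv (φ ∘ cayley w) =ᶠ[𝓝 0]
      fun z ↦ (deriv φ ∘ cayley w) z * (2 * w.re / (1 - z) ^ 2) := by
    filter_upwards [ball_mem_nhds 0 one_pos] with z hz using (hasDerivAt_comp_cayley hφ hw hz).deriv
  have hfst := hasDerivAt_comp_cayley (hφ.deriv (isOpen_re_gt 0)) hw (mem_ball_self one_pos)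
  have hsnd : HasDerivAt (fun z : ℂ ↦ 2 * (w.re : ℂ) / (1 - z) ^ 2) (4 * (w.re : ℂ)) 0 := by
    refine ((hasDerivAt_const (0 : ℂ) (2 * (w.re : ℂ))).fun_div
      (((hasDerivAt_id' (0 : ℂ)).const_sub 1).fun_pow 2) (by simp)).congr_deriv ?_
    push_cast
    simp only [sub_zero, one_pow, div_one]
    ring
  rw [hderiv.deriv_eq, (hfst.fun_mul hsnd).deriv, Function.comp_apply, cayley_zero]
  simp only [sub_zero, one_pow, div_one]
  ring

theorem norm_re_mul_deriv_deriv_add_deriv_le {φ : ℂ → ℂ}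
    (hφ : DifferentiableOn ℂ φ {z | 0 < z.re}) (hinj : InjOn φ {z | 0 < z.re}) {w : ℂ}
    (hw : 0 < w.re) : ‖w.re * deriv (deriv φ) w + deriv φ w‖ ≤ 2 * ‖deriv φ w‖ := by
  have hball : MapsTo (cayley w) (ball 0 1) {z | 0 < z.re} := fun z ↦ re_cayley_pos hw
  have h := norm_deriv_deriv_le_four_mul_norm_deriv
    (fun z hz ↦ (hasDerivAt_comp_cayley hφ hw hz).differentiableAt.differentiableWithinAt)
    (hinj.comp (injOn_cayley hw.ne') hball)
  rw [deriv_deriv_comp_cayley hφ hw, (hasDerivAt_comp_cayley hφ hw (mem_ball_self one_pos)).deriv,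
    cayley_zero] at h
  simp only [norm_mul, norm_ofNat, norm_real, Real.norm_of_nonneg hw.le, sub_zero, one_pow,
    div_one] at h
  refine le_of_mul_le_mul_left ?_ (show 0 < 4 * w.re by positivity)
  linarith

theorem norm_le_div_rpow_mul_norm_of_norm_deriv_le {E : Type*} [NormedAddCommGroup E]
    [NormedSpace ℝ E] {f f' : ℝ → E} {a b k : ℝ} (ha : 0 < a) (hab : a ≤ b)
    (hf : ∀ x ∈ Icc a b, HasDerivAt f (f' x) x) (hle : ∀ x ∈ Icc a b, ‖x • f' x‖ ≤ k * ‖f x‖) :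
    ‖f b‖ ≤ (b / a) ^ k * ‖f a‖ := by
  have hb : 0 < b := ha.trans_le hab
  have hmem {t : ℝ} (ht : t ∈ Icc (Real.log a) (Real.log b)) : Real.exp t ∈ Icc a b :=
    ⟨(Real.log_le_iff_le_exp ha).1 ht.1, (Real.le_log_iff_exp_le hb).1 ht.2⟩
  have hderiv (t : ℝ) (ht : t ∈ Icc (Real.log a) (Real.log b)) :
      HasDerivAt (fun t ↦ f (Real.exp t)) (Real.exp t • f' (Real.exp t)) t :=
    (hf _ (hmem ht)).scomp t (Real.hasDerivAt_exp t)
  have h := norm_le_gronwallBound_of_norm_deriv_right_le (δ := ‖f a‖) (K := k) (ε := 0)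
    (fun t ht ↦ (hderiv t ht).continuousAt.continuousWithinAt)
    (fun t ht ↦ (hderiv t (Ico_subset_Icc_self ht)).hasDerivWithinAt)
    (by rw [Real.exp_log ha])
    (fun t ht ↦ by simpa using hle _ (hmem (Ico_subset_Icc_self ht)))
    (Real.log b) (right_mem_Icc.2 (Real.log_le_log ha hab))
  rwa [gronwallBound_ε0, Real.exp_log hb, ← Real.log_div hb.ne' ha.ne', mul_comm, mul_comm k,
    ← Real.rpow_def_of_pos (div_pos hb ha)] at h

theorem norm_deriv_le_div_mul_norm_deriv {φ : ℂ → ℂ} (hφ : DifferentiableOn ℂ φ {z | 0 < z.re})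
    (hinj : InjOn φ {z | 0 < z.re}) {a b : ℝ} (ha : 0 < a) (hab : a ≤ b) (y : ℝ) :
    ‖deriv φ (b + y * I)‖ ≤ b / a * ‖deriv φ (a + y * I)‖ := by
  have hb : 0 < b := ha.trans_le hab
  have hre (x : ℝ) : (x + y * I : ℂ).re = x := by simp
  have hderiv (x : ℝ) (hx : x ∈ Icc a b) :
      HasDerivAt (fun x : ℝ ↦ (x : ℂ) * deriv φ (x + y * I))
        (x * deriv (deriv φ) (x + y * I) + deriv φ (x + y * I)) x := by
    have hmem : {z : ℂ | 0 < z.re} ∈ 𝓝 (x + y * I : ℂ) :=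
      (isOpen_re_gt 0).mem_nhds ((ha.trans_le hx.1).trans_eq (hre x).symm)
    have hφ' := ((hφ.deriv (isOpen_re_gt 0)).differentiableAt hmem).hasDerivAt.comp_add_const
      (x : ℂ) (y * I)
    refine ((hasDerivAt_id' (x : ℂ)).fun_mul hφ').comp_ofReal.congr_deriv ?_
    ring
  have h := norm_le_div_rpow_mul_norm_of_norm_deriv_le (k := 2) ha hab hderiv fun x hx ↦ by
    have hx₀ : 0 < x := ha.trans_le hx.1
    have := norm_re_mul_deriv_deriv_add_deriv_le hφ hinj (hx₀.trans_eq (hre x).symm)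
    rw [hre] at this
    rw [norm_smul, norm_mul, norm_real, mul_left_comm]
    gcongr
  rw [norm_mul, norm_mul, norm_real, norm_real, Real.norm_of_nonneg ha.le,
    Real.norm_of_nonneg hb.le, Real.rpow_two] at h
  refine le_of_mul_le_mul_left (h.trans_eq ?_) hb
  field_simp

end

theorem growth_at_logR_general {φ : ℂ → ℂ} {H α T : ℝ} (hH : 0 ≤ H) (hα : 0 ≤ α) (hT : 1 ≤ T)
    (hdiff : DifferentiableOn ℂ φ {z | 0 < z.re}) (hinj : Set.InjOn φ {z | 0 < z.re})
    (hHol : ∀ w₁ ∈ Qsq 1, ∀ w₂ ∈ Qsq 1,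
      ‖φ (T * w₁) - φ (T * w₂)‖ ≤ H * T * ‖deriv φ T‖ * ‖w₁ - w₂‖ ^ α) :
    ‖φ T‖ ≤ ‖φ 1‖ + H * ‖deriv φ 1‖ * T ^ 2 := by
  have hT₀ : 0 < T := one_pos.trans_le hT
  have hT_inv : T⁻¹ ≤ 1 := inv_le_one_of_one_le₀ hT
  have hT_inv₀ : 0 < T⁻¹ := inv_pos.2 hT₀
  have hone : (1 : ℂ) ∈ Qsq 1 := by simp [Qsq]
  have hinv : ((T⁻¹ : ℝ) : ℂ) ∈ Qsq 1 := by
    refine ⟨?_, ?_, ?_, ?_⟩ <;> simp only [ofReal_re, ofReal_im] <;> linarith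
  have hdist : ‖(1 : ℂ) - (T⁻¹ : ℝ)‖ ^ α ≤ 1 := by
    refine Real.rpow_le_one (norm_nonneg _) ?_ hα
    rw [← ofReal_one, ← ofReal_sub, norm_real, Real.norm_of_nonneg (sub_nonneg.2 hT_inv)]
    linarith
  have hdistortion : ‖deriv φ T‖ ≤ T * ‖deriv φ 1‖ := by
    simpa using norm_deriv_le_div_mul_norm_deriv hdiff hinj one_pos hT 0
  have hincrement : ‖φ T - φ 1‖ ≤ H * ‖deriv φ 1‖ * T ^ 2 := by
    calc ‖φ T - φ 1‖ = ‖φ (T * 1) - φ (T * (T⁻¹ : ℝ))‖ := by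
          rw [mul_one, ← ofReal_mul, mul_inv_cancel₀ hT₀.ne', ofReal_one]
      _ ≤ H * T * ‖deriv φ T‖ * ‖(1 : ℂ) - (T⁻¹ : ℝ)‖ ^ α := hHol 1 hone _ hinv
      _ ≤ H * T * (T * ‖deriv φ 1‖) * 1 := by gcongr
      _ = H * ‖deriv φ 1‖ * T ^ 2 := by ring
  exact (norm_le_norm_add_norm_sub' _ _).trans (by gcongr)

/-- First part of Lemma 5.1 of the paper: the quantitative growth estimate
`|φ(log R)| ≤ |φ(1)| + 16 H |φ'(1)| (log R)²`. -/
theorem growth_at_logR (φ : ℂ → ℂ) (H α : ℝ)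
    (hH : 0 < H) (hα : 0 < α) (hα1 : α ≤ 1)
    (hdiff : DifferentiableOn ℂ φ {z : ℂ | 0 < z.re})
    (hinj : Set.InjOn φ {z : ℂ | 0 < z.re})
    (hHol : ∀ T : ℝ, 1 ≤ T → ∀ w₁ ∈ Qsq 1, ∀ w₂ ∈ Qsq 1,
      ‖φ ((T : ℂ) * w₁) - φ ((T : ℂ) * w₂)‖
        ≤ H * T * ‖deriv φ (T : ℂ)‖ * ‖w₁ - w₂‖ ^ α) :
    ∀ R : ℝ, Real.exp 1 ≤ R →
      ‖φ ((Real.log R : ℝ) : ℂ)‖ ≤ ‖φ 1‖ + 16 * H * ‖deriv φ 1‖ * (Real.log R) ^ 2 := by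
  intro R hR
  have hT : 1 ≤ Real.log R := (Real.le_log_iff_exp_le ((Real.exp_pos 1).trans_le hR)).2 hR
  refine (growth_at_logR_general hH.le hα.le hT hdiff hinj (hHol _ hT)).trans ?_
  gcongr
  linarith
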